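/- Let T₂ = {2×2 matrices over Fq with rows (m, n) and (0, m) : m ∈ Fqˣ, n ∈ Fq}, a subgroup of GL₂(Fq). The map z ↦ H·γ(0,z)·T₂ is a bijection from Fqˣ onto the set of (H, T₂)-double cosets in GL₂(Fq). -/

import Mathlib

/-!
Identify `K²` with the quadratic extension `K(θ)` via the basis `1, θ`. Then `H` consists of the
multiplications by nonzero elements of `K(θ)`, so it is transitive on nonzero vectors. Hence every
`g` agrees in its first column with some `h ∈ H`, and `h⁻¹ g`, whose first column is `(1, 0)`, lies
in `γ(0, z) T₂` where `z` is its lower right entry. Conversely, if `γ(0, z') = h γ(0, z) t`, then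
`h` is upper triangular, hence a scalar, and comparing diagonal entries gives `z = z'`.
-/

theorem doubleCoset_mk_surjective {G : Type*} [Group G] (H K : Subgroup G) :
    Function.Surjective (DoubleCoset.mk H K) :=
  fun q => ⟨q.out, DoubleCoset.out_eq' H K q⟩

theorem bijective_doubleCoset_iff_bijective_mk {G ι : Type*} [Group G] {H K : Subgroup G}
    {f : ι → G} :
    Function.Bijective (fun i =>
      (⟨{x | ∃ h ∈ H, ∃ k ∈ K, x = h * f i * k}, ⟨f i, rfl⟩⟩ :
        {S : Set G // ∃ g : G, S = {x | ∃ h ∈ H, ∃ k ∈ K, x = h * g * k}})) ↔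
      Function.Bijective (fun i => DoubleCoset.mk H K (f i)) := by
  have setOf_eq (g : G) :
      {x | ∃ h ∈ H, ∃ k ∈ K, x = h * g * k} = DoubleCoset.doubleCoset g H K :=
    Set.ext fun _ => DoubleCoset.mem_doubleCoset.symm
  have mk_eq_iff (g g' : G) : DoubleCoset.mk H K g = DoubleCoset.mk H K g' ↔
      DoubleCoset.doubleCoset g H K = DoubleCoset.doubleCoset g' H K :=
    DoubleCoset.eq'' H K
  refine and_congr ?_ ?_
  · simp only [Function.Injective, Subtype.mk.injEq, setOf_eq, mk_eq_iff]
  · simp only [Function.Surjective, Subtype.forall, Subtype.mk.injEq, forall_exists_index,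
      setOf_eq]
    rw [forall_comm]
    simp only [forall_eq, (doubleCoset_mk_surjective H K).forall, mk_eq_iff]

theorem inv_mul_apply_of_col_eq {n R : Type*} [Fintype n] [DecidableEq n] [CommRing R]
    {g h : GL n R} {j : n} (hcol : ∀ i, h i j = g i j) (i : n) :
    (h⁻¹ * g) i j = (1 : Matrix n n R) i j := by
  calc (h⁻¹ * g) i j = ∑ k, h⁻¹ i k * g k j := Matrix.mul_apply
    _ = ∑ k, h⁻¹ i k * h k j := by simp only [hcol]
    _ = (h⁻¹ * h) i j := Matrix.mul_apply.symm
    _ = (1 : Matrix n n R) i j := by rw [inv_mul_cancel, Units.val_one]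

section CommRing

variable {R : Type*} [CommRing R] {γ : Rˣ → GL (Fin 2) R}

theorem col_zero_ne_zero [Nontrivial R] (g : GL (Fin 2) R) : (g 0 0, g 1 0) ≠ (0, 0) := by
  intro hcol
  obtain ⟨h00, h10⟩ := Prod.mk.inj hcol
  exact g.det_ne_zero (by rw [Matrix.det_fin_two, h00, h10, zero_mul, mul_zero, sub_zero])

theorem exists_eq_diagonal_mul_upperRightHom
    (hγ : ∀ z : Rˣ, (γ z : Matrix (Fin 2) (Fin 2) R) = !![1, 0; 0, (z : R)])
    {g : GL (Fin 2) R} (h00 : g 0 0 = 1) (h10 : g 1 0 = 0) :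
    ∃ (z : Rˣ) (n : R), g = γ z * Matrix.GeneralLinearGroup.upperRightHom n := by
  have det_eq : (g : Matrix (Fin 2) (Fin 2) R).det = g 1 1 := by
    rw [Matrix.det_fin_two, h00, h10, one_mul, mul_zero, sub_zero]
  obtain ⟨z, hz⟩ : IsUnit (g 1 1) := det_eq ▸ (Matrix.isUnit_iff_isUnit_det _).1 g.isUnit
  refine ⟨z, g 0 1, Units.ext ?_⟩
  rw [Units.val_mul, hγ, Matrix.GeneralLinearGroup.upperRightHom_apply,
    Matrix.eta_fin_two (g : Matrix (Fin 2) (Fin 2) R)]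
  simp [h00, h10, hz]

theorem eq_of_diagonal_eq_mul_diagonal_mul
    (hγ : ∀ z : Rˣ, (γ z : Matrix (Fin 2) (Fin 2) R) = !![1, 0; 0, (z : R)])
    {h t : GL (Fin 2) R} (hdiag : h 1 0 = 0 → h 0 0 = h 1 1) {m : Rˣ} {n : R}
    (ht : (t : Matrix (Fin 2) (Fin 2) R) = !![(m : R), n; 0, (m : R)]) {z z' : Rˣ}
    (heq : γ z' = h * γ z * t) : z = z' := by
  have hmat : !![1, 0; 0, (z' : R)] = !![h 0 0, h 0 1; h 1 0, h 1 1] * !![1, 0; 0, (z : R)] *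
      !![(m : R), n; 0, (m : R)] := by
    rw [← Matrix.eta_fin_two (h : Matrix (Fin 2) (Fin 2) R), ← hγ, ← hγ, ← ht, heq]
    rfl
  have h00 : 1 = h 0 0 * m := by simpa using congr_fun₂ hmat 0 0
  have h10 : h 1 0 = 0 := m.mul_left_eq_zero.1 (by simpa using (congr_fun₂ hmat 1 0).symm)
  have h11 : (z' : R) = h 1 1 * z * m := by simpa [h10] using congr_fun₂ hmat 1 1
  ext
  linear_combination (z : R) * h00 + z * m * hdiag h10 - h11

/-- The matrix of multiplication by `x + y θ` in the basis `1, θ` of `R[θ]`, where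
`θ² = p θ - c`. For `p = 2a` and `c = a² - b²α` it is the matrix `M(x, y)` describing `H`. -/
def torusMatrix (p c x y : R) : Matrix (Fin 2) (Fin 2) R :=
  !![x, -c * y; y, x + p * y]

theorem det_torusMatrix (p c x y : R) :
    (torusMatrix p c x y).det = x ^ 2 + p * x * y + c * y ^ 2 := by
  rw [torusMatrix, Matrix.det_fin_two_of]
  ring

end CommRing

section Field

variable {K : Type*} [Field K]

theorem bijective_mk_diagonal_of_transitive {H T₂ : Subgroup (GL (Fin 2) K)}
    (htrans : ∀ x y : K, (x, y) ≠ (0, 0) → ∃ h ∈ H, h 0 0 = x ∧ h 1 0 = y)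
    (hdiag : ∀ h ∈ H, h 1 0 = 0 → h 0 0 = h 1 1)
    (hT₂ : ∀ t, t ∈ T₂ ↔ ∃ m : Kˣ, ∃ n : K,
      (t : Matrix (Fin 2) (Fin 2) K) = !![(m : K), n; 0, (m : K)])
    {γ : Kˣ → GL (Fin 2) K}
    (hγ : ∀ z : Kˣ, (γ z : Matrix (Fin 2) (Fin 2) K) = !![1, 0; 0, (z : K)]) :
    Function.Bijective (fun z => DoubleCoset.mk H T₂ (γ z)) := by
  refine ⟨fun z z' hzz' => ?_, (doubleCoset_mk_surjective H T₂).forall.2 fun g => ?_⟩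
  · obtain ⟨h, hh, t, ht, heq⟩ := (DoubleCoset.eq H T₂ _ _).1 hzz'
    obtain ⟨m, n, htmn⟩ := (hT₂ t).1 ht
    exact eq_of_diagonal_eq_mul_diagonal_mul hγ (hdiag h hh) htmn heq
  · obtain ⟨h, hh, h00, h10⟩ := htrans _ _ (col_zero_ne_zero g)
    have hcol : ∀ i, h i 0 = g i 0 := Fin.forall_fin_two.2 ⟨h00, h10⟩
    obtain ⟨z, n, heq⟩ := exists_eq_diagonal_mul_upperRightHom hγ
      (inv_mul_apply_of_col_eq hcol 0) (inv_mul_apply_of_col_eq hcol 1)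
    have hn : Matrix.GeneralLinearGroup.upperRightHom n ∈ T₂ := (hT₂ _).2 ⟨1, n, rfl⟩
    refine ⟨z, (DoubleCoset.eq H T₂ _ _).2 ⟨h, hh, _, hn, ?_⟩⟩
    rw [mul_assoc, ← heq, mul_inv_cancel_left]

theorem det_torusMatrix_ne_zero {p c : K} (hroot : ∀ θ : K, θ ^ 2 - p * θ + c ≠ 0) {x y : K}
    (hxy : (x, y) ≠ (0, 0)) : (torusMatrix p c x y).det ≠ 0 := by
  rw [det_torusMatrix]
  rcases eq_or_ne y 0 with rfl | hy
  · have hx : x ≠ 0 := fun hx => hxy (by rw [hx])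
    simpa using hx
  · have norm_eq : x ^ 2 + p * x * y + c * y ^ 2 =
        y ^ 2 * ((-x / y) ^ 2 - p * (-x / y) + c) := by
      field_simp
      ring
    rw [norm_eq]
    exact mul_ne_zero (pow_ne_zero 2 hy) (hroot _)

theorem stmt_15_general {p c : K} (hroot : ∀ θ : K, θ ^ 2 - p * θ + c ≠ 0)
    {H T₂ : Subgroup (GL (Fin 2) K)}
    (hH : ∀ h, h ∈ H ↔ ∃ x y : K, (x, y) ≠ (0, 0) ∧
      (h : Matrix (Fin 2) (Fin 2) K) = torusMatrix p c x y)
    (hT₂ : ∀ t, t ∈ T₂ ↔ ∃ m : Kˣ, ∃ n : K,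
      (t : Matrix (Fin 2) (Fin 2) K) = !![(m : K), n; 0, (m : K)])
    {γ : Kˣ → GL (Fin 2) K}
    (hγ : ∀ z : Kˣ, (γ z : Matrix (Fin 2) (Fin 2) K) = !![1, 0; 0, (z : K)]) :
    Function.Bijective (fun z => DoubleCoset.mk H T₂ (γ z)) := by
  refine bijective_mk_diagonal_of_transitive (fun x y hxy => ?_) (fun h hh h10 => ?_) hT₂ hγ
  · exact ⟨.mkOfDetNeZero _ (det_torusMatrix_ne_zero hroot hxy), (hH _).2 ⟨x, y, hxy, rfl⟩,
      rfl, rfl⟩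
  · obtain ⟨x, y, -, hxy⟩ := (hH h).1 hh
    rw [hxy] at h10 ⊢
    have hy : y = 0 := h10
    simp [torusMatrix, hy]

theorem sq_sub_two_mul_add_ne_zero {a b α : K} (hb : b ≠ 0) (hα : ∀ x : K, x ^ 2 ≠ α) (θ : K) :
    θ ^ 2 - 2 * a * θ + (a ^ 2 - b ^ 2 * α) ≠ 0 := by
  intro hθ
  have hsq : (θ - a) ^ 2 = α * b ^ 2 := by linear_combination hθ
  exact hα ((θ - a) / b) (by rw [div_pow, hsq, mul_div_cancel_right₀ _ (pow_ne_zero 2 hb)])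

end Field

/-- The map `z ↦ H·γ(0,z)·T₂` is a bijection from `Fqˣ` onto the set of `(H, T₂)`-double
cosets in `GL₂(Fq)`, where `T₂` is the group of invertible upper-triangular matrices with
equal diagonal entries. -/
theorem stmt_15 (q : ℕ) (hodd : Odd q) (Fq : Type*) [Field Fq] [Fintype Fq]
    (hq : Fintype.card Fq = q)
    (a b α : Fq) (hα : ¬∃ x : Fq, x ^ 2 = α)
    (hab : ¬∃ x : Fq, x ^ 2 = a ^ 2 - b ^ 2 * α)
    (H : Subgroup (GL (Fin 2) Fq))
    (hH : (H : Set (GL (Fin 2) Fq)) = {g : GL (Fin 2) Fq | ∃ x y : Fq, (x, y) ≠ (0, 0) ∧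
      (g : Matrix (Fin 2) (Fin 2) Fq) = !![x, -(a ^ 2 - b ^ 2 * α) * y; y, x + 2 * a * y]})
    (T₂ : Subgroup (GL (Fin 2) Fq))
    (hT₂ : (T₂ : Set (GL (Fin 2) Fq)) = {g : GL (Fin 2) Fq | ∃ m : Fqˣ, ∃ n : Fq,
      (g : Matrix (Fin 2) (Fin 2) Fq) = !![(m : Fq), n; 0, (m : Fq)]})
    (γ : Fqˣ → GL (Fin 2) Fq)
    (hγ : ∀ z : Fqˣ, ((γ z : Matrix (Fin 2) (Fin 2) Fq)) = !![1, 0; 0, (z : Fq)]) :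
    Function.Bijective (fun z : Fqˣ =>
      (⟨{x | ∃ h ∈ H, ∃ t ∈ T₂, x = h * γ z * t},
        ⟨γ z, rfl⟩⟩ : {S : Set (GL (Fin 2) Fq) //
          ∃ g : GL (Fin 2) Fq, S = {x | ∃ h ∈ H, ∃ t ∈ T₂, x = h * g * t}})) := by
  have hb : b ≠ 0 := fun hb => hab ⟨a, by simp [hb]⟩
  exact bijective_doubleCoset_iff_bijective_mk.2 <|
    stmt_15_general (sq_sub_two_mul_add_ne_zero hb (not_exists.1 hα))
      (Set.ext_iff.1 hH) (Set.ext_iff.1 hT₂) hγ
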